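/- Let f > 0, g > 0 and ρ ≥ 0 be real numbers such that 2ρ√g − ρ²f > 0. Then f/g ≤ 1/(2ρ√g − ρ²f). -/

import Mathlib

theorem mul_two_mul_sub_sq_mul_le_sq {R : Type*} [CommRing R] [LinearOrder R] [IsOrderedRing R]
    (f s ρ : R) : f * (2 * ρ * s - ρ ^ 2 * f) ≤ s ^ 2 :=
  calc
    f * (2 * ρ * s - ρ ^ 2 * f) = s ^ 2 - (s - ρ * f) ^ 2 := by ring
    _ ≤ s ^ 2 := sub_le_self _ (sq_nonneg _)

theorem inverse_quadratic_transform_upper_bound_general {K : Type*} [Field K] [LinearOrder K]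
    [IsStrictOrderedRing K] {f s ρ : K} (hs : s ≠ 0) (hpos : 0 < 2 * ρ * s - ρ ^ 2 * f) :
    f / s ^ 2 ≤ 1 / (2 * ρ * s - ρ ^ 2 * f) := by
  rw [div_le_div_iff₀ (sq_pos_of_ne_zero hs) hpos, one_mul]
  exact mul_two_mul_sub_sq_mul_le_sq f s ρ

/-- Inverse quadratic transform upper bound (Lemma 2, second inequality):
for positive reals `f, g` and `ρ ≥ 0` with `2ρ√g − ρ²f > 0`,
`f/g ≤ 1/(2ρ√g − ρ²f)`. -/
theorem inverse_quadratic_transform_upper_bound (f g ρ : ℝ) (hf : 0 < f) (hg : 0 < g)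
    (hρ : 0 ≤ ρ) (hpos : 0 < 2 * ρ * Real.sqrt g - ρ ^ 2 * f) :
    f / g ≤ 1 / (2 * ρ * Real.sqrt g - ρ ^ 2 * f) := by
  simpa only [Real.sq_sqrt hg.le] using
    inverse_quadratic_transform_upper_bound_general (Real.sqrt_ne_zero'.2 hg) hpos
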